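/- Let j ≥ 0 and k ∈ {1,2}. If the space S_{j,k}(Γ₂[2]) of Siegel cusp forms of degree 2 and weight (j,k) on the principal congruence subgroup Γ₂[2] of level 2 is nonzero, then the space S_{2j,2k}(Γ₂) of Siegel cusp forms of weight (2j,2k) on Γ₂ = Sp(4,ℤ) is nonzero. -/

import Mathlib

noncomputable section

open Matrix Complex Filter Topology

/-- The standard symplectic form matrix of size 4. -/
def J4 : Matrix (Fin 4) (Fin 4) ℤ := !![0,0,1,0; 0,0,0,1; -1,0,0,0; 0,-1,0,0]

/-- The Siegel modular group `Γ₂ = Sp(4,ℤ)`, as a set of 4×4 integer matrices. -/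
def Sp4Z : Set (Matrix (Fin 4) (Fin 4) ℤ) := {γ | γᵀ * J4 * γ = J4}

/-- The principal congruence subgroup `Γ₂[2]` of level 2. -/
def Sp4Z2 : Set (Matrix (Fin 4) (Fin 4) ℤ) :=
  {γ | γ ∈ Sp4Z ∧ ∀ i j, ((γ i j : ZMod 2) = if i = j then 1 else 0)}

/-- The Siegel upper half space of degree 2: symmetric 2×2 complex matrices with
positive definite imaginary part (encoded as functions `Fin 2 → Fin 2 → ℂ`). -/
def H2 : Set (Fin 2 → Fin 2 → ℂ) :=
  {τ | (Matrix.of τ).IsSymm ∧ (Matrix.of fun i j => (τ i j).im).PosDef}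

/-- The four 2×2 blocks of a 4×4 integer matrix, as complex matrices. -/
def blk (γ : Matrix (Fin 4) (Fin 4) ℤ) (r s : Fin 2) : Matrix (Fin 2) (Fin 2) ℂ :=
  Matrix.of fun i j =>
    ((γ ⟨2 * (r : ℕ) + (i : ℕ), by have h1 := r.isLt; have h2 := i.isLt; omega⟩
        ⟨2 * (s : ℕ) + (j : ℕ), by have h1 := s.isLt; have h2 := j.isLt; omega⟩ : ℤ) : ℂ)

/-- The factor `cτ + d`. -/
def den (γ : Matrix (Fin 4) (Fin 4) ℤ) (τ : Fin 2 → Fin 2 → ℂ) : Matrix (Fin 2) (Fin 2) ℂ :=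
  blk γ 1 0 * Matrix.of τ + blk γ 1 1

/-- The action `γ·τ = (aτ+b)(cτ+d)⁻¹` of `Sp(4)` on the Siegel upper half space. -/
def moeb (γ : Matrix (Fin 4) (Fin 4) ℤ) (τ : Fin 2 → Fin 2 → ℂ) : Fin 2 → Fin 2 → ℂ :=
  fun i j => ((blk γ 0 0 * Matrix.of τ + blk γ 0 1) * (den γ τ)⁻¹) i j

/-- Matrix coefficients of the `j`-th symmetric power of the standard representation of
`GL(2,ℂ)`, in the basis `x₁^(j-i) x₂^i`. -/
def symCoeff (j : ℕ) (m : Matrix (Fin 2) (Fin 2) ℂ) (l i : Fin (j + 1)) : ℂ :=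
  (((Polynomial.C (m 0 0) + Polynomial.C (m 1 0) * Polynomial.X) ^ (j - (l : ℕ)) *
    (Polynomial.C (m 0 1) + Polynomial.C (m 1 1) * Polynomial.X) ^ (l : ℕ)).coeff i)

/-- The `j`-th symmetric power `Sym^j(m)` acting on coordinate vectors. -/
def symAct (j : ℕ) (m : Matrix (Fin 2) (Fin 2) ℂ) (v : Fin (j + 1) → ℂ) : Fin (j + 1) → ℂ :=
  fun i => ∑ l, symCoeff j m l i * v l

lemma symAct_add (j : ℕ) (m : Matrix (Fin 2) (Fin 2) ℂ) (v w : Fin (j + 1) → ℂ) :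
    symAct j m (v + w) = symAct j m v + symAct j m w := by
  funext i
  simp [symAct, mul_add, Finset.sum_add_distrib]

lemma symAct_smul (j : ℕ) (m : Matrix (Fin 2) (Fin 2) ℂ) (a : ℂ) (v : Fin (j + 1) → ℂ) :
    symAct j m (a • v) = a • symAct j m v := by
  funext i
  simp only [symAct, Pi.smul_apply, smul_eq_mul, Finset.mul_sum]
  exact Finset.sum_congr rfl fun l _ => by ring

lemma symAct_zero (j : ℕ) (m : Matrix (Fin 2) (Fin 2) ℂ) : symAct j m 0 = 0 := by
  funext i; simp [symAct]

/-- The weight `(j,k)` automorphy action `Sym^j(m) ⊗ det(m)^k`. -/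
def wt (j : ℕ) (k : ℤ) (m : Matrix (Fin 2) (Fin 2) ℂ) (v : Fin (j + 1) → ℂ) :
    Fin (j + 1) → ℂ :=
  (m.det ^ k) • symAct j m v

lemma wt_add (j : ℕ) (k : ℤ) (m : Matrix (Fin 2) (Fin 2) ℂ) (v w : Fin (j + 1) → ℂ) :
    wt j k m (v + w) = wt j k m v + wt j k m w := by
  simp [wt, symAct_add, smul_add]

lemma wt_smul (j : ℕ) (k : ℤ) (m : Matrix (Fin 2) (Fin 2) ℂ) (a : ℂ) (v : Fin (j + 1) → ℂ) :
    wt j k m (a • v) = a • wt j k m v := by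
  rw [wt, wt, symAct_smul, smul_comm]

lemma wt_zero (j : ℕ) (k : ℤ) (m : Matrix (Fin 2) (Fin 2) ℂ) : wt j k m 0 = 0 := by
  simp [wt, symAct_zero]

/-- The slash operation `(F|γ)(τ) = Sym^j(cτ+d)⁻¹ det(cτ+d)⁻ᵏ F(γ·τ)`. -/
def slashS (j : ℕ) (k : ℤ) (γ : Matrix (Fin 4) (Fin 4) ℤ)
    (F : (Fin 2 → Fin 2 → ℂ) → (Fin (j + 1) → ℂ)) (τ : Fin 2 → Fin 2 → ℂ) :
    Fin (j + 1) → ℂ :=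
  ((den γ τ).det ^ (-k)) • symAct j ((den γ τ)⁻¹) (F (moeb γ τ))

lemma slashS_add (j : ℕ) (k : ℤ) (γ : Matrix (Fin 4) (Fin 4) ℤ)
    (F G : (Fin 2 → Fin 2 → ℂ) → (Fin (j + 1) → ℂ)) (τ : Fin 2 → Fin 2 → ℂ) :
    slashS j k γ (F + G) τ = slashS j k γ F τ + slashS j k γ G τ := by
  simp [slashS, symAct_add, smul_add]

lemma slashS_smul (j : ℕ) (k : ℤ) (γ : Matrix (Fin 4) (Fin 4) ℤ) (a : ℂ)
    (F : (Fin 2 → Fin 2 → ℂ) → (Fin (j + 1) → ℂ)) (τ : Fin 2 → Fin 2 → ℂ) :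
    slashS j k γ (a • F) τ = a • slashS j k γ F τ := by
  simp only [slashS, Pi.smul_apply, symAct_smul]
  rw [smul_comm]

lemma slashS_zero (j : ℕ) (k : ℤ) (γ : Matrix (Fin 4) (Fin 4) ℤ) (τ : Fin 2 → Fin 2 → ℂ) :
    slashS j k γ (0 : (Fin 2 → Fin 2 → ℂ) → (Fin (j + 1) → ℂ)) τ = 0 := by
  simp [slashS, symAct_zero]

/-- The diagonal point `diag(τ₁,τ₂)` of the Siegel upper half space. -/
def diagH (τ₁ τ₂ : ℂ) : Fin 2 → Fin 2 → ℂ :=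
  fun i j => if i = j then (if i = 0 then τ₁ else τ₂) else 0

/-- `F` is a Siegel cusp form of degree 2 and weight `(j,k)` on `Γ`, with character `χ`:
holomorphic on `ℍ₂`, transforming by `F(γ·τ) = χ(γ) Sym^j(cτ+d) det(cτ+d)^k F(τ)` for `γ ∈ Γ`,
with `(F|γ)(diag(τ₁,it)) → 0` as `t → ∞` for every `γ ∈ Γ₂`, and (normalization) vanishing
off `ℍ₂`. -/
def IsSiegelCuspForm (j : ℕ) (k : ℤ) (Γ : Set (Matrix (Fin 4) (Fin 4) ℤ))
    (χ : Matrix (Fin 4) (Fin 4) ℤ → ℂ)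
    (F : (Fin 2 → Fin 2 → ℂ) → (Fin (j + 1) → ℂ)) : Prop :=
  DifferentiableOn ℂ F H2 ∧
  (∀ γ ∈ Γ, ∀ τ ∈ H2, F (moeb γ τ) = χ γ • wt j k (den γ τ) (F τ)) ∧
  (∀ γ ∈ Sp4Z, ∀ τ₁ : ℂ, 0 < τ₁.im →
    Tendsto (fun t : ℝ => slashS j k γ F (diagH τ₁ (t * Complex.I))) atTop (𝓝 0)) ∧
  (∀ τ, τ ∉ H2 → F τ = 0)

/-- The space `S_{j,k}(Γ, χ)` of Siegel cusp forms of degree 2 and weight `(j,k)` on `Γ`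
with character `χ`, as a complex vector space. -/
def SiegelCusp (j : ℕ) (k : ℤ) (Γ : Set (Matrix (Fin 4) (Fin 4) ℤ))
    (χ : Matrix (Fin 4) (Fin 4) ℤ → ℂ) :
    Submodule ℂ ((Fin 2 → Fin 2 → ℂ) → (Fin (j + 1) → ℂ)) where
  carrier := {F | IsSiegelCuspForm j k Γ χ F}
  add_mem' := by
    rintro F G hF hG
    refine ⟨hF.1.add hG.1, ?_, ?_, ?_⟩
    · intro γ hγ τ hτ
      show F (moeb γ τ) + G (moeb γ τ) = χ γ • wt j k (den γ τ) (F τ + G τ)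
      rw [wt_add, smul_add, hF.2.1 γ hγ τ hτ, hG.2.1 γ hγ τ hτ]
    · intro γ hγ τ₁ hτ
      have h := (hF.2.2.1 γ hγ τ₁ hτ).add (hG.2.2.1 γ hγ τ₁ hτ)
      rw [add_zero] at h
      exact h.congr fun t => (slashS_add j k γ F G _).symm
    · intro τ hτ
      show F τ + G τ = 0
      rw [hF.2.2.2 τ hτ, hG.2.2.2 τ hτ, add_zero]
  zero_mem' := by
    refine ⟨?_, ?_, ?_, ?_⟩
    · exact differentiableOn_const 0
    · intro γ hγ τ hτ
      show (0 : Fin (j + 1) → ℂ) = χ γ • wt j k (den γ τ) 0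
      rw [wt_zero, smul_zero]
    · intro γ hγ τ₁ hτ
      have : (fun t : ℝ => slashS j k γ (0 : (Fin 2 → Fin 2 → ℂ) → (Fin (j + 1) → ℂ))
          (diagH τ₁ (t * Complex.I))) = fun _ => 0 := by
        funext t; exact slashS_zero j k γ _
      rw [this]
      exact tendsto_const_nhds
    · intro τ _; rfl
  smul_mem' := by
    rintro a F hF
    refine ⟨hF.1.const_smul a, ?_, ?_, ?_⟩
    · intro γ hγ τ hτ
      show a • F (moeb γ τ) = χ γ • wt j k (den γ τ) (a • F τ)
      rw [hF.2.1 γ hγ τ hτ, wt_smul, smul_comm]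
    · intro γ hγ τ₁ hτ
      have h := (hF.2.2.1 γ hγ τ₁ hτ).const_smul a
      rw [smul_zero] at h
      exact h.congr fun t => (slashS_smul j k γ a F _).symm
    · intro τ hτ
      show a • F τ = 0
      rw [hF.2.2.2 τ hτ, smul_zero]

/-- `ε` is (on `Γ₂`) the unique nontrivial homomorphism `Γ₂ → {±1}`. -/
def IsEps (ε : Matrix (Fin 4) (Fin 4) ℤ → ℂ) : Prop :=
  (∀ γ ∈ Sp4Z, ε γ = 1 ∨ ε γ = -1) ∧
  (∀ γ ∈ Sp4Z, ∀ δ ∈ Sp4Z, ε (γ * δ) = ε γ * ε δ) ∧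
  (∃ γ ∈ Sp4Z, ε γ ≠ 1)

/-! For a cusp form `F` let `F^c(τ) = conj F(-conj τ)` and let `G` be the sum of the products
`(F|γ)·(F|γ)^c` over `γ ∈ Γ₂[2]\Γ₂`. Slashing `F^c` by `δ` amounts to slashing `F` by the conjugate
of `δ` under `diag(1, 1, -1, -1)`. That matrix is the identity modulo 2, so `δ` and its conjugate
permute the cosets of `Γ₂[2]` in the same way, and `G` is a cusp form on `Γ₂`. At a purely imaginary
`τ`, where `-conj τ = τ`, the value of `G(τ)`, as a binary form, on a real vector is the sum of the
squared absolute values of the values of the `(F|γ)(τ)`. If `G = 0`, then `F` vanishes at all purely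
imaginary points, hence everywhere by the identity theorem. The products `(F|γ)·(F|γ)^c` take the
place of the squares `(F|γ)²`, whose sum need not behave this way unless `F` is defined over
`ℚ`. -/

section BinaryForms

/-- The value at `(x, y)` of the binary form `∑ vᵢ x^(j-i) y^i` with coefficient vector `v`, as a
linear function of `v`. Identities in `Sym^j(ℂ²)` are proved by comparing the values of forms. -/
def binaryForm (j : ℕ) (x y : ℂ) : (Fin (j + 1) → ℂ) →ₗ[ℂ] ℂ :=
  Fintype.linearCombination ℂ fun i : Fin (j + 1) => x ^ (j - (i : ℕ)) * y ^ (i : ℕ)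

lemma binaryForm_apply (j : ℕ) (x y : ℂ) (v : Fin (j + 1) → ℂ) :
    binaryForm j x y v = ∑ i, v i * (x ^ (j - (i : ℕ)) * y ^ (i : ℕ)) := rfl

lemma binaryForm_toFn (j : ℕ) (x y : ℂ) (p : Polynomial ℂ) :
    binaryForm j x y (Polynomial.toFn (j + 1) p) =
      MvPolynomial.eval ![y, x] (p.homogenize j) := by
  simp only [binaryForm_apply, Polynomial.homogenize, map_sum,
    Finset.Nat.sum_antidiagonal_eq_sum_range_succ_mk, Finset.sum_range]
  refine Finset.sum_congr rfl fun i _ => ?_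
  rw [Finsupp.update_eq_add_single (by simp), MvPolynomial.eval_monomial]
  simp [Polynomial.toFn, Finsupp.prod_add_index', pow_add, mul_comm]

lemma binaryForm_eq_eval_homogenize (j : ℕ) (x y : ℂ) (v : Fin (j + 1) → ℂ) :
    binaryForm j x y v =
      MvPolynomial.eval ![y, x] ((Polynomial.ofFn (j + 1) v).homogenize j) := by
  rw [← binaryForm_toFn, Polynomial.toFn_comp_ofFn_eq_id]

lemma natDegree_ofFn_succ_le {R : Type*} [Semiring R] [DecidableEq R] {j : ℕ}
    (v : Fin (j + 1) → R) :
    (Polynomial.ofFn (j + 1) v).natDegree ≤ j :=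
  Nat.le_of_lt_succ (Polynomial.ofFn_natDegree_lt j.succ_pos v)

lemma eq_zero_of_binaryForm_one_ofReal_eq_zero {j : ℕ} {v : Fin (j + 1) → ℂ}
    (h : ∀ y : ℝ, binaryForm j 1 (y : ℂ) v = 0) : v = 0 := by
  have hroot (y : ℝ) : (Polynomial.ofFn (j + 1) v).IsRoot y := by
    rw [Polynomial.IsRoot.def, ← h y, binaryForm_eq_eval_homogenize]
    exact (Polynomial.eval₂_homogenize_of_eq_one (natDegree_ofFn_succ_le v) (RingHom.id ℂ)
      ![(y : ℂ), 1] rfl).symm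
  have hinf : Set.Infinite {z | (Polynomial.ofFn (j + 1) v).IsRoot z} :=
    (Set.infinite_range_of_injective ofReal_injective).mono (Set.range_subset_iff.2 hroot)
  exact Polynomial.injective_ofFn (j + 1)
    ((Polynomial.eq_zero_of_infinite_isRoot _ hinf).trans (map_zero _).symm)

lemma binaryForm_ext {j : ℕ} {v w : Fin (j + 1) → ℂ}
    (h : ∀ x y, binaryForm j x y v = binaryForm j x y w) : v = w :=
  sub_eq_zero.1 <| eq_zero_of_binaryForm_one_ofReal_eq_zero fun y => by
    rw [map_sub, h, sub_self]

lemma binaryForm_star (j : ℕ) (x y : ℂ) (v : Fin (j + 1) → ℂ) :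
    binaryForm j x y (star v) = star (binaryForm j (star x) (star y) v) := by
  simp [binaryForm_apply]

lemma eval_homogenize_linear (a b x y : ℂ) :
    MvPolynomial.eval ![y, x]
      ((Polynomial.C a + Polynomial.C b * Polynomial.X).homogenize 1) = a * x + b * y := by
  simp [Polynomial.homogenize_X]

lemma homogenize_pow {R : Type*} [CommSemiring R] {p : Polynomial R} {d : ℕ}
    (hp : p.natDegree ≤ d) (n : ℕ) :
    (p ^ n).homogenize (n * d) = p.homogenize d ^ n := by
  simpa using Polynomial.homogenize_finsetProd (s := Finset.range n) (p := fun _ => p)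
    (n := fun _ => d) fun _ _ => hp

lemma eval_homogenize_linear_pow_mul (a b c d x y : ℂ) (p q : ℕ) :
    MvPolynomial.eval ![y, x] (((Polynomial.C a + Polynomial.C b * Polynomial.X) ^ p *
      (Polynomial.C c + Polynomial.C d * Polynomial.X) ^ q).homogenize (p + q)) =
      (a * x + b * y) ^ p * (c * x + d * y) ^ q := by
  have hdeg (a b : ℂ) : (Polynomial.C a + Polynomial.C b * Polynomial.X).natDegree ≤ 1 := by
    compute_degree
  have hdegpow (a b : ℂ) (n : ℕ) :
      ((Polynomial.C a + Polynomial.C b * Polynomial.X) ^ n).natDegree ≤ n := by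
    simpa using Polynomial.natDegree_pow_le_of_le n (hdeg a b)
  have hpow (a b : ℂ) (n : ℕ) : MvPolynomial.eval ![y, x]
      (((Polynomial.C a + Polynomial.C b * Polynomial.X) ^ n).homogenize n) =
        (a * x + b * y) ^ n := by
    rw [← eval_homogenize_linear, ← map_pow, ← homogenize_pow (hdeg a b), mul_one]
  rw [Polynomial.homogenize_mul _ _ (hdegpow a b p) (hdegpow c d q), map_mul, hpow, hpow]

lemma binaryForm_symCoeff (j : ℕ) (m : Matrix (Fin 2) (Fin 2) ℂ) (l : Fin (j + 1)) (x y : ℂ) :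
    binaryForm j x y (symCoeff j m l) =
      (m 0 0 * x + m 1 0 * y) ^ (j - (l : ℕ)) * (m 0 1 * x + m 1 1 * y) ^ (l : ℕ) := by
  have h := eval_homogenize_linear_pow_mul (m 0 0) (m 1 0) (m 0 1) (m 1 1) x y (j - l) l
  rw [Nat.sub_add_cancel (Nat.le_of_lt_succ l.2)] at h
  exact (binaryForm_toFn j x y _).trans h

end BinaryForms

section SymmetricPowers

variable (j : ℕ) (m n : Matrix (Fin 2) (Fin 2) ℂ) (v : Fin (j + 1) → ℂ)

lemma symAct_eq_sum : symAct j m v = ∑ l, v l • symCoeff j m l := by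
  ext i
  simp [symAct, mul_comm]

lemma binaryForm_symAct (x y : ℂ) :
    binaryForm j x y (symAct j m v) =
      binaryForm j (m 0 0 * x + m 1 0 * y) (m 0 1 * x + m 1 1 * y) v := by
  simp only [symAct_eq_sum, map_sum, map_smul, binaryForm_symCoeff]
  rfl

lemma symAct_mul : symAct j (m * n) v = symAct j m (symAct j n v) := by
  refine binaryForm_ext fun x y => ?_
  simp only [binaryForm_symAct, Matrix.mul_apply, Fin.sum_univ_two]
  ring_nf

lemma symAct_one : symAct j 1 v = v :=
  binaryForm_ext fun x y => by simp [binaryForm_symAct]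

lemma symAct_star : symAct j (m.map star) (star v) = star (symAct j m v) :=
  binaryForm_ext fun x y => by simp [binaryForm_symAct, binaryForm_star]

end SymmetricPowers

section Multiplication

variable {a b c : ℕ}

/-- The multiplication `Sym^a(ℂ²) × Sym^b(ℂ²) → Sym^c(ℂ²)` of binary forms. It is meant for
`c = a + b`; a separate index `c` avoids casts between `Fin (2 * j + 1)` and `Fin (j + j + 1)`. -/
def symMul (a b c : ℕ) : (Fin (a + 1) → ℂ) →ₗ[ℂ] (Fin (b + 1) → ℂ) →ₗ[ℂ] (Fin (c + 1) → ℂ) :=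
  ((LinearMap.mul ℂ (Polynomial ℂ)).compl₁₂ (Polynomial.ofFn (a + 1))
    (Polynomial.ofFn (b + 1))).compr₂ (Polynomial.toFn (c + 1))

lemma binaryForm_symMul (h : a + b = c) (v : Fin (a + 1) → ℂ) (w : Fin (b + 1) → ℂ) (x y : ℂ) :
    binaryForm c x y (symMul a b c v w) = binaryForm a x y v * binaryForm b x y w := by
  subst h
  rw [binaryForm_eq_eval_homogenize a, binaryForm_eq_eval_homogenize b, ← map_mul,
    ← Polynomial.homogenize_mul _ _ (natDegree_ofFn_succ_le v) (natDegree_ofFn_succ_le w)]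
  exact binaryForm_toFn _ x y _

lemma symAct_symMul (h : a + b = c) (m : Matrix (Fin 2) (Fin 2) ℂ) (v : Fin (a + 1) → ℂ)
    (w : Fin (b + 1) → ℂ) :
    symAct c m (symMul a b c v w) = symMul a b c (symAct a m v) (symAct b m w) :=
  binaryForm_ext fun x y => by simp only [binaryForm_symAct, binaryForm_symMul h]

end Multiplication

section PositiveDefinite

open scoped ComplexOrder MatrixOrder Matrix.Norms.L2Operator

variable {ι : Type*} [Finite ι] {M : Matrix ι ι ℝ}

lemma posDef_map_ofReal_iff : (M.map ofReal).PosDef ↔ M.PosDef := by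
  classical
  have := Fintype.ofFinite ι
  constructor
  · intro h
    refine .of_dotProduct_mulVec_pos ?_ fun x hx => ?_
    · have hM : Mᴴ.map ofReal = M.map ofReal :=
        (conjTranspose_map ofReal fun r => (conj_ofReal r).symm).trans h.isHermitian
      exact Matrix.map_injective ofReal_injective hM
    · have hx' : ofReal ∘ x ≠ 0 := fun h0 => hx <| funext fun i => ofReal_injective (congrFun h0 i)
      have := h.dotProduct_mulVec_pos hx'
      simp only [dotProduct, mulVec, map_apply, Function.comp_apply, Pi.star_apply, star_def,
        conj_ofReal] at this ⊢
      exact_mod_cast this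
  · intro h
    obtain ⟨B, hB, rfl⟩ := CStarAlgebra.isStrictlyPositive_iff_eq_star_mul_self.mp
      h.isStrictlyPositive
    have hBM : (star B * B).map ofReal = (B.map ofReal)ᴴ * B.map ofReal := by
      rw [star_eq_conjTranspose, ← conjTranspose_map _ fun r => (conj_ofReal r).symm]
      exact Matrix.map_mul (f := ofRealHom)
    rw [hBM]
    refine .conjTranspose_mul_self _ (mulVec_injective_of_isUnit ?_)
    exact hB.map (ofRealHom.mapMatrix : Matrix ι ι ℝ →+* Matrix ι ι ℂ)

end PositiveDefinite

section SymplecticBlocks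

variable {γ : Matrix (Fin 4) (Fin 4) ℤ} {σ τ : Fin 2 → Fin 2 → ℂ}

lemma blk_mul (γ δ : Matrix (Fin 4) (Fin 4) ℤ) (r s : Fin 2) :
    blk (γ * δ) r s = blk γ r 0 * blk δ 0 s + blk γ r 1 * blk δ 1 s := by
  ext i j
  simp only [blk, Matrix.of_apply, Matrix.mul_apply, Matrix.add_apply, Fin.sum_univ_four,
    Fin.sum_univ_two]
  push_cast
  ring_nf
  rfl

lemma blk_transpose (γ : Matrix (Fin 4) (Fin 4) ℤ) (r s : Fin 2) :
    blk γᵀ r s = (blk γ s r)ᵀ := rfl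

lemma blk_map_star (γ : Matrix (Fin 4) (Fin 4) ℤ) (r s : Fin 2) :
    (blk γ r s).map star = blk γ r s := by
  ext i j
  simp [blk]

lemma blk_J4 : blk J4 0 0 = 0 ∧ blk J4 0 1 = 1 ∧ blk J4 1 0 = -1 ∧ blk J4 1 1 = 0 := by
  refine ⟨?_, ?_, ?_, ?_⟩ <;> ext i j <;> fin_cases i <;> fin_cases j <;> simp [blk, J4]

lemma blk_transpose_mul_blk_sub (hγ : γ ∈ Sp4Z) (r s : Fin 2) :
    (blk γ 0 r)ᵀ * blk γ 1 s - (blk γ 1 r)ᵀ * blk γ 0 s = blk J4 r s := by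
  obtain ⟨h00, h01, h10, h11⟩ := blk_J4
  have hJ : γᵀ * J4 * γ = J4 := hγ
  conv_rhs => rw [← hJ]
  simp only [blk_mul, blk_transpose, h00, h01, h10, h11]
  noncomm_ring

/-- The factor `aτ + b`. -/
def num (γ : Matrix (Fin 4) (Fin 4) ℤ) (τ : Fin 2 → Fin 2 → ℂ) : Matrix (Fin 2) (Fin 2) ℂ :=
  blk γ 0 0 * Matrix.of τ + blk γ 0 1

lemma of_moeb (γ : Matrix (Fin 4) (Fin 4) ℤ) (τ : Fin 2 → Fin 2 → ℂ) :
    Matrix.of (moeb γ τ) = num γ τ * (den γ τ)⁻¹ := rfl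

lemma den_star (γ : Matrix (Fin 4) (Fin 4) ℤ) (τ : Fin 2 → Fin 2 → ℂ) :
    den γ (star τ) = (den γ τ).map star := by
  conv_lhs => rw [den, ← blk_map_star γ 1 0, ← blk_map_star γ 1 1]
  ext i j
  simp [den, Matrix.mul_apply]

lemma num_star (γ : Matrix (Fin 4) (Fin 4) ℤ) (τ : Fin 2 → Fin 2 → ℂ) :
    num γ (star τ) = (num γ τ).map star := by
  conv_lhs => rw [num, ← blk_map_star γ 0 0, ← blk_map_star γ 0 1]
  ext i j
  simp [num, Matrix.mul_apply]

/- Taking `σ = τ` symmetric shows that `γ·τ` is symmetric, and `σ = star τ` computes its imaginary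
part. -/
lemma num_transpose_mul_den_sub (hγ : γ ∈ Sp4Z) (σ τ : Fin 2 → Fin 2 → ℂ) :
    (num γ σ)ᵀ * den γ τ - (den γ σ)ᵀ * num γ τ = (Matrix.of σ)ᵀ - Matrix.of τ := by
  obtain ⟨h00, h01, h10, h11⟩ := blk_J4
  calc (num γ σ)ᵀ * den γ τ - (den γ σ)ᵀ * num γ τ
      = (Matrix.of σ)ᵀ * ((blk γ 0 0)ᵀ * blk γ 1 0 - (blk γ 1 0)ᵀ * blk γ 0 0) * Matrix.of τ
        + (Matrix.of σ)ᵀ * ((blk γ 0 0)ᵀ * blk γ 1 1 - (blk γ 1 0)ᵀ * blk γ 0 1)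
        + ((blk γ 0 1)ᵀ * blk γ 1 0 - (blk γ 1 1)ᵀ * blk γ 0 0) * Matrix.of τ
        + ((blk γ 0 1)ᵀ * blk γ 1 1 - (blk γ 1 1)ᵀ * blk γ 0 1) := by
        simp only [num, den, transpose_add, transpose_mul]
        noncomm_ring
    _ = (Matrix.of σ)ᵀ - Matrix.of τ := by
        simp only [blk_transpose_mul_blk_sub hγ, h00, h01, h10, h11]
        noncomm_ring

lemma of_moeb_transpose_sub (hγ : γ ∈ Sp4Z) (hσ : IsUnit (den γ σ).det)
    (hτ : IsUnit (den γ τ).det) :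
    (Matrix.of (moeb γ σ))ᵀ - Matrix.of (moeb γ τ) =
      ((den γ σ)⁻¹)ᵀ * ((Matrix.of σ)ᵀ - Matrix.of τ) * (den γ τ)⁻¹ := by
  have hσ' : ((den γ σ)⁻¹)ᵀ * (den γ σ)ᵀ = 1 := by
    rw [← transpose_mul, mul_nonsing_inv _ hσ, transpose_one]
  rw [← num_transpose_mul_den_sub hγ σ τ, of_moeb, of_moeb, transpose_mul, Matrix.mul_sub,
    Matrix.sub_mul, ← Matrix.mul_assoc, mul_nonsing_inv_cancel_right _ _ hτ, ← Matrix.mul_assoc,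
    hσ', Matrix.one_mul]

end SymplecticBlocks

section SiegelSpace

open scoped ComplexOrder

variable {γ : Matrix (Fin 4) (Fin 4) ℤ} {τ : Fin 2 → Fin 2 → ℂ}

/-- The imaginary part of a matrix, regarded as a complex matrix. -/
def imPart (τ : Fin 2 → Fin 2 → ℂ) : Matrix (Fin 2) (Fin 2) ℂ :=
  (Matrix.of fun i j => (τ i j).im).map ofReal

lemma mem_H2_iff_posDef_imPart : τ ∈ H2 ↔ (Matrix.of τ).IsSymm ∧ (imPart τ).PosDef :=
  and_congr_right' posDef_map_ofReal_iff.symm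

lemma of_star_transpose_sub (hτ : (Matrix.of τ).IsSymm) :
    (Matrix.of (star τ))ᵀ - Matrix.of τ = (-(2 * I)) • imPart τ := by
  ext i j
  have hji : τ j i = τ i j := hτ.apply i j
  apply Complex.ext <;> simp [imPart, hji]
  ring

lemma det_den_ne_zero (hγ : γ ∈ Sp4Z) (hτ : τ ∈ H2) : (den γ τ).det ≠ 0 := by
  intro h0
  obtain ⟨hsymm, hpos⟩ := mem_H2_iff_posDef_imPart.1 hτ
  obtain ⟨v, hv, hden⟩ := Matrix.exists_mulVec_eq_zero_iff.2 h0
  have hvden : star v ᵥ* (den γ (star τ))ᵀ = 0 := by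
    rw [den_star]
    exact (star_mulVec _ _).symm.trans ((congrArg star hden).trans (star_zero _))
  have him : star v ⬝ᵥ (-(2 * I)) • imPart τ *ᵥ v = 0 := by
    rw [← smul_mulVec, ← of_star_transpose_sub hsymm, ← num_transpose_mul_den_sub hγ,
      Matrix.sub_mulVec, ← mulVec_mulVec, hden, ← mulVec_mulVec, mulVec_zero, zero_sub,
      dotProduct_neg, dotProduct_mulVec, hvden, zero_dotProduct, neg_zero]
  rw [dotProduct_smul, smul_eq_zero] at him
  exact (hpos.dotProduct_mulVec_pos hv).ne' (him.resolve_left (by simp))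

lemma isUnit_det_den (hγ : γ ∈ Sp4Z) (hτ : τ ∈ H2) : IsUnit (den γ τ).det :=
  (det_den_ne_zero hγ hτ).isUnit

lemma map_star_nonsing_inv (m : Matrix (Fin 2) (Fin 2) ℂ) : m⁻¹.map star = (m.map star)⁻¹ := by
  rw [← transpose_inj, transpose_nonsing_inv]
  exact conjTranspose_nonsing_inv m

lemma moeb_star (γ : Matrix (Fin 4) (Fin 4) ℤ) (τ : Fin 2 → Fin 2 → ℂ) :
    moeb γ (star τ) = star (moeb γ τ) := by
  apply Matrix.of.injective
  rw [of_moeb, den_star, num_star, ← map_star_nonsing_inv]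
  exact (Matrix.map_mul (L := num γ τ) (M := (den γ τ)⁻¹) (f := starRingEnd ℂ)).symm

lemma moeb_mem_H2 (hγ : γ ∈ Sp4Z) (hτ : τ ∈ H2) : moeb γ τ ∈ H2 := by
  obtain ⟨hsymm, hpos⟩ := mem_H2_iff_posDef_imPart.1 hτ
  have hu := isUnit_det_den hγ hτ
  have hu' : IsUnit (den γ (star τ)).det := by
    rw [den_star]
    exact RingHom.map_det (starRingEnd ℂ) (den γ τ) ▸ hu.map (starRingEnd ℂ)
  have hsymm' : (Matrix.of (moeb γ τ)).IsSymm := by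
    have := of_moeb_transpose_sub hγ hu hu
    rwa [hsymm.eq, sub_self, Matrix.mul_zero, Matrix.zero_mul, sub_eq_zero] at this
  have him : imPart (moeb γ τ) = ((den γ τ)⁻¹)ᴴ * imPart τ * (den γ τ)⁻¹ := by
    have := of_moeb_transpose_sub hγ hu' hu
    rw [moeb_star, of_star_transpose_sub hsymm', of_star_transpose_sub hsymm, den_star,
      ← map_star_nonsing_inv, Matrix.mul_smul, Matrix.smul_mul] at this
    exact smul_right_injective _ (by simp) this
  refine mem_H2_iff_posDef_imPart.2 ⟨hsymm', him ▸ hpos.conjTranspose_mul_mul_same ?_⟩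
  rw [mulVec_injective_iff_isUnit, isUnit_nonsing_inv_iff, isUnit_iff_isUnit_det]
  exact hu

end SiegelSpace

section SlashOperator

variable {j : ℕ} {k : ℤ} {γ δ : Matrix (Fin 4) (Fin 4) ℤ} {τ : Fin 2 → Fin 2 → ℂ}

lemma of_moeb_mul_den (hγ : γ ∈ Sp4Z) (hτ : τ ∈ H2) :
    Matrix.of (moeb γ τ) * den γ τ = num γ τ := by
  rw [of_moeb, nonsing_inv_mul_cancel_right _ _ (isUnit_det_den hγ hτ)]

lemma den_mul (γ : Matrix (Fin 4) (Fin 4) ℤ) (hδ : δ ∈ Sp4Z) (hτ : τ ∈ H2) :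
    den (γ * δ) τ = den γ (moeb δ τ) * den δ τ := by
  rw [den.eq_1 γ, Matrix.add_mul, Matrix.mul_assoc, of_moeb_mul_den hδ hτ]
  simp only [den, num, blk_mul]
  noncomm_ring

lemma num_mul (γ : Matrix (Fin 4) (Fin 4) ℤ) (hδ : δ ∈ Sp4Z) (hτ : τ ∈ H2) :
    num (γ * δ) τ = num γ (moeb δ τ) * den δ τ := by
  rw [num.eq_1 γ, Matrix.add_mul, Matrix.mul_assoc, of_moeb_mul_den hδ hτ]
  simp only [den, num, blk_mul]
  noncomm_ring

lemma moeb_mul (γ : Matrix (Fin 4) (Fin 4) ℤ) (hδ : δ ∈ Sp4Z) (hτ : τ ∈ H2) :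
    moeb (γ * δ) τ = moeb γ (moeb δ τ) := by
  apply Matrix.of.injective
  rw [of_moeb, of_moeb, den_mul γ hδ hτ, num_mul γ hδ hτ, Matrix.mul_inv_rev, ← Matrix.mul_assoc,
    mul_nonsing_inv_cancel_right _ _ (isUnit_det_den hδ hτ)]

lemma slashS_mul (γ : Matrix (Fin 4) (Fin 4) ℤ) (hδ : δ ∈ Sp4Z)
    (F : (Fin 2 → Fin 2 → ℂ) → Fin (j + 1) → ℂ) (hτ : τ ∈ H2) :
    slashS j k (γ * δ) F τ = slashS j k δ (slashS j k γ F) τ := by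
  simp only [slashS, moeb_mul γ hδ hτ, den_mul γ hδ hτ, Matrix.mul_inv_rev, symAct_mul, symAct_smul,
    smul_smul, det_mul, mul_zpow, mul_comm]

lemma slashS_congr {F G : (Fin 2 → Fin 2 → ℂ) → Fin (j + 1) → ℂ} (h : Set.EqOn F G H2)
    (hγ : γ ∈ Sp4Z) (hτ : τ ∈ H2) : slashS j k γ F τ = slashS j k γ G τ := by
  rw [slashS, slashS, h (moeb_mem_H2 hγ hτ)]

lemma slashS_eq_iff {F : (Fin 2 → Fin 2 → ℂ) → Fin (j + 1) → ℂ} (hγ : γ ∈ Sp4Z) (hτ : τ ∈ H2)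
    (v : Fin (j + 1) → ℂ) : slashS j k γ F τ = v ↔ F (moeb γ τ) = wt j k (den γ τ) v := by
  have hu := isUnit_det_den hγ hτ
  have hk : (den γ τ).det ^ k ≠ 0 := zpow_ne_zero _ hu.ne_zero
  rw [slashS, wt, _root_.zpow_neg, inv_smul_eq_iff₀ hk, ← symAct_smul]
  constructor
  · intro h
    rw [← h, ← symAct_mul, mul_nonsing_inv _ hu, symAct_one]
  · intro h
    rw [h, ← symAct_mul, nonsing_inv_mul _ hu, symAct_one]

lemma slashS_sum {ι : Type*} (s : Finset ι) (F : ι → (Fin 2 → Fin 2 → ℂ) → Fin (j + 1) → ℂ) :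
    slashS j k γ (∑ r ∈ s, F r) = ∑ r ∈ s, slashS j k γ (F r) :=
  map_sum (AddMonoidHom.mk' (slashS j k γ) fun F G => funext (slashS_add j k γ F G)) F s

lemma slashS_symMul {a b c : ℕ} (h : a + b = c) (k l : ℤ) (hγ : γ ∈ Sp4Z) (hτ : τ ∈ H2)
    (F : (Fin 2 → Fin 2 → ℂ) → Fin (a + 1) → ℂ) (G : (Fin 2 → Fin 2 → ℂ) → Fin (b + 1) → ℂ) :
    slashS c (k + l) γ (fun τ => symMul a b c (F τ) (G τ)) τ =
      symMul a b c (slashS a k γ F τ) (slashS b l γ G τ) := by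
  simp only [slashS, symAct_symMul h, map_smul, LinearMap.smul_apply, smul_smul, neg_add,
    zpow_add₀ (det_den_ne_zero hγ hτ), mul_comm]

end SlashOperator

section Reflection

variable {γ : Matrix (Fin 4) (Fin 4) ℤ} {τ : Fin 2 → Fin 2 → ℂ}

lemma neg_star_mem_H2 (hτ : τ ∈ H2) : -star τ ∈ H2 := by
  refine ⟨(hτ.1.map star).neg, ?_⟩
  convert hτ.2 using 4
  simp

/-- Conjugation by `ε = diag(1, 1, -1, -1)`. On `Γ₂` it is the automorphism induced by the
reflection `τ ↦ -conj τ` of `ℍ₂`. -/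
def epsConj (γ : Matrix (Fin 4) (Fin 4) ℤ) : Matrix (Fin 4) (Fin 4) ℤ :=
  diagonal ![1, 1, -1, -1] * γ * diagonal ![1, 1, -1, -1]

lemma epsConj_mem (hγ : γ ∈ Sp4Z) : epsConj γ ∈ Sp4Z := by
  have hJ : γᵀ * J4 * γ = J4 := hγ
  have hε : diagonal ![1, 1, -1, -1] * J4 * diagonal ![1, 1, -1, -1] = -J4 := by decide
  calc (epsConj γ)ᵀ * J4 * epsConj γ
      = diagonal ![1, 1, -1, -1] *
          (γᵀ * (diagonal ![1, 1, -1, -1] * J4 * diagonal ![1, 1, -1, -1]) * γ) *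
          diagonal ![1, 1, -1, -1] := by
        simp only [epsConj, transpose_mul, diagonal_transpose, Matrix.mul_assoc]
    _ = J4 := by
        rw [hε, Matrix.mul_neg, Matrix.neg_mul, hJ, Matrix.mul_neg, Matrix.neg_mul, hε, neg_neg]

lemma blk_epsConj (γ : Matrix (Fin 4) (Fin 4) ℤ) (r s : Fin 2) :
    blk (epsConj γ) r s = (-1 : ℂ) ^ (r + s : ℕ) • blk γ r s := by
  ext i j
  fin_cases r <;> fin_cases s <;> fin_cases i <;> fin_cases j <;> simp [blk, epsConj]

lemma den_epsConj_neg (γ : Matrix (Fin 4) (Fin 4) ℤ) (τ : Fin 2 → Fin 2 → ℂ) :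
    den (epsConj γ) (-τ) = den γ τ := by
  simp [den, blk_epsConj, ← neg_of]

lemma num_epsConj_neg (γ : Matrix (Fin 4) (Fin 4) ℤ) (τ : Fin 2 → Fin 2 → ℂ) :
    num (epsConj γ) (-τ) = -num γ τ := by
  simp [num, blk_epsConj, ← neg_of, add_comm]

lemma moeb_epsConj_neg (γ : Matrix (Fin 4) (Fin 4) ℤ) (τ : Fin 2 → Fin 2 → ℂ) :
    moeb (epsConj γ) (-τ) = -moeb γ τ := by
  apply Matrix.of.injective
  rw [of_moeb, num_epsConj_neg, den_epsConj_neg, Matrix.neg_mul]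
  rfl

/-- The form `F^c(τ) = conj F(-conj τ)`, whose Fourier coefficients are the complex conjugates of
those of `F`. -/
def conjForm {j : ℕ} (F : (Fin 2 → Fin 2 → ℂ) → Fin (j + 1) → ℂ) :
    (Fin 2 → Fin 2 → ℂ) → Fin (j + 1) → ℂ :=
  fun τ => star (F (-star τ))

lemma slashS_conjForm (j : ℕ) (k : ℤ) (γ : Matrix (Fin 4) (Fin 4) ℤ)
    (F : (Fin 2 → Fin 2 → ℂ) → Fin (j + 1) → ℂ) :
    slashS j k γ (conjForm F) = conjForm (slashS j k (epsConj γ) F) := by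
  funext τ
  have hdet : ((den γ τ).map star).det = star (den γ τ).det :=
    (RingHom.map_det (starRingEnd ℂ) (den γ τ)).symm
  simp only [slashS, conjForm, den_epsConj_neg, moeb_epsConj_neg, moeb_star, den_star,
    ← map_star_nonsing_inv, star_smul, ← symAct_star, hdet, star_zpow₀, star_star]
  congr 3
  ext
  simp

end Reflection

section Holomorphy

variable {E : Type*} [NormedAddCommGroup E] [NormedSpace ℂ E] {s : Set E}

lemma differentiableOn_star_star {F : Type*} [NormedAddCommGroup F] [NormedSpace ℂ F]
    [StarAddMonoid E] [StarModule ℂ E] [ContinuousStar E]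
    [StarAddMonoid F] [StarModule ℂ F] [ContinuousStar F] {f : E → F}
    (hf : DifferentiableOn ℂ f s) :
    DifferentiableOn ℂ (fun x => star (f (star x))) (star ⁻¹' s) := by
  intro x hx
  obtain ⟨f', hf'⟩ := hf (star x) hx
  have hstar : HasFDerivWithinAt star (starL' ℝ : E ≃L[ℝ] E).toContinuousLinearMap (star ⁻¹' s) x :=
    (starL' ℝ : E ≃L[ℝ] E).hasFDerivWithinAt
  have hcomp := ((hf'.restrictScalars ℝ).comp x hstar fun _ hy => hy).star
  exact ⟨(starL ℂ).toContinuousLinearMap.comp (f'.comp (starL ℂ).toContinuousLinearMap),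
    hcomp.of_restrictScalars ℝ rfl⟩

section PolynomialCoefficients

variable {p q : E → Polynomial ℂ}

lemma differentiableOn_coeff_mul (hp : ∀ n, DifferentiableOn ℂ (fun x => (p x).coeff n) s)
    (hq : ∀ n, DifferentiableOn ℂ (fun x => (q x).coeff n) s) (n : ℕ) :
    DifferentiableOn ℂ (fun x => (p x * q x).coeff n) s := by
  simp only [Polynomial.coeff_mul]
  exact .fun_sum fun r _ => (hp r.1).mul (hq r.2)

lemma differentiableOn_coeff_pow (hp : ∀ n, DifferentiableOn ℂ (fun x => (p x).coeff n) s)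
    (d n : ℕ) : DifferentiableOn ℂ (fun x => (p x ^ d).coeff n) s := by
  induction d generalizing n with
  | zero => simpa only [pow_zero] using differentiableOn_const _
  | succ d ih => simpa only [pow_succ] using differentiableOn_coeff_mul ih hp n

end PolynomialCoefficients

variable {m : E → Matrix (Fin 2) (Fin 2) ℂ}

lemma differentiableOn_symCoeff (hm : ∀ r t, DifferentiableOn ℂ (fun x => m x r t) s) (j : ℕ)
    (l i : Fin (j + 1)) : DifferentiableOn ℂ (fun x => symCoeff j (m x) l i) s := by
  have hlinear (t : Fin 2) (n : ℕ) : DifferentiableOn ℂ (fun x =>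
      (Polynomial.C (m x 0 t) + Polynomial.C (m x 1 t) * Polynomial.X).coeff n) s := by
    simp only [Polynomial.coeff_add, Polynomial.coeff_C_mul]
    refine .add ?_ ((hm 1 t).mul_const _)
    simp only [Polynomial.coeff_C]
    split_ifs
    exacts [hm 0 t, differentiableOn_const _]
  exact differentiableOn_coeff_mul (differentiableOn_coeff_pow (hlinear 0) _)
    (differentiableOn_coeff_pow (hlinear 1) _) _

lemma differentiableOn_det (hm : ∀ r t, DifferentiableOn ℂ (fun x => m x r t) s) :
    DifferentiableOn ℂ (fun x => (m x).det) s := by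
  simp only [det_fin_two]
  fun_prop

lemma differentiableOn_nonsing_inv (hm : ∀ r t, DifferentiableOn ℂ (fun x => m x r t) s)
    (hdet : ∀ x ∈ s, (m x).det ≠ 0) (r t : Fin 2) :
    DifferentiableOn ℂ (fun x => (m x)⁻¹ r t) s := by
  simp only [Matrix.inv_def, Ring.inverse_eq_inv', Matrix.smul_apply, smul_eq_mul, adjugate_fin_two]
  refine ((differentiableOn_det hm).inv hdet).mul ?_
  fin_cases r <;> fin_cases t
  exacts [hm 1 1, (hm 0 1).neg, (hm 1 0).neg, hm 0 0]

lemma differentiableOn_symMul {a b c : ℕ} {v : E → Fin (a + 1) → ℂ} {w : E → Fin (b + 1) → ℂ}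
    (hv : DifferentiableOn ℂ v s) (hw : DifferentiableOn ℂ w s) :
    DifferentiableOn ℂ (fun x => symMul a b c (v x) (w x)) s :=
  ((symMul a b c).toContinuousBilinearMap.differentiable.comp_differentiableOn hv).clm_apply hw

section SiegelSpace

variable {γ : Matrix (Fin 4) (Fin 4) ℤ}

lemma differentiable_den (γ : Matrix (Fin 4) (Fin 4) ℤ) (r t : Fin 2) :
    Differentiable ℂ fun τ => den γ τ r t := by
  simp only [den, Matrix.add_apply, Matrix.mul_apply, Matrix.of_apply]
  fun_prop

lemma differentiable_num (γ : Matrix (Fin 4) (Fin 4) ℤ) (r t : Fin 2) :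
    Differentiable ℂ fun τ => num γ τ r t := by
  simp only [num, Matrix.add_apply, Matrix.mul_apply, Matrix.of_apply]
  fun_prop

lemma differentiableOn_den_inv (hγ : γ ∈ Sp4Z) (r t : Fin 2) :
    DifferentiableOn ℂ (fun τ => (den γ τ)⁻¹ r t) H2 :=
  differentiableOn_nonsing_inv (fun r t => (differentiable_den γ r t).differentiableOn)
    (fun _ => det_den_ne_zero hγ) r t

lemma differentiableOn_moeb (hγ : γ ∈ Sp4Z) : DifferentiableOn ℂ (moeb γ) H2 :=
  differentiableOn_pi.2 fun r => differentiableOn_pi.2 fun t =>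
    .fun_sum (u := Finset.univ) fun u _ =>
      (differentiable_num γ r u).differentiableOn.mul (differentiableOn_den_inv hγ u t)

lemma differentiableOn_slashS {j : ℕ} (k : ℤ) (hγ : γ ∈ Sp4Z)
    {F : (Fin 2 → Fin 2 → ℂ) → Fin (j + 1) → ℂ} (hF : DifferentiableOn ℂ F H2) :
    DifferentiableOn ℂ (slashS j k γ F) H2 := by
  have hdet : DifferentiableOn ℂ (fun τ => (den γ τ).det) H2 :=
    differentiableOn_det fun r t => (differentiable_den γ r t).differentiableOn
  have hFγ := hF.comp (differentiableOn_moeb hγ) fun _ => moeb_mem_H2 hγ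
  refine (hdet.zpow (.inl fun _ => det_den_ne_zero hγ)).smul (differentiableOn_pi.2 fun i => ?_)
  exact .fun_sum fun l _ => (differentiableOn_symCoeff (differentiableOn_den_inv hγ) j l i).mul
    (differentiableOn_pi.1 hFγ l)

lemma differentiableOn_conjForm {j : ℕ} {F : (Fin 2 → Fin 2 → ℂ) → Fin (j + 1) → ℂ}
    (hF : DifferentiableOn ℂ F H2) : DifferentiableOn ℂ (conjForm F) H2 := by
  have hneg : DifferentiableOn ℂ (fun τ => F (-τ)) (-H2) :=
    hF.comp differentiable_id.neg.differentiableOn fun _ hτ => hτ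
  exact (differentiableOn_star_star hneg).mono fun _ => neg_star_mem_H2

end SiegelSpace

end Holomorphy

section IdentityTheorem

lemma posDef_fin_two_iff {M : Matrix (Fin 2) (Fin 2) ℝ} :
    M.PosDef ↔ M.IsSymm ∧ 0 < M 0 0 ∧ 0 < M.det := by
  refine ⟨fun h => ⟨h.isHermitian, h.diag_pos, h.det_pos⟩, ?_⟩
  rintro ⟨hsymm, ha, hdet⟩
  refine .of_dotProduct_mulVec_pos hsymm fun x hx => pos_of_mul_pos_right (a := M 0 0) ?_ ha.le
  have hsquare : M 0 0 * (star x ⬝ᵥ M *ᵥ x) =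
      (M 0 0 * x 0 + M 0 1 * x 1) ^ 2 + M.det * x 1 ^ 2 := by
    simp only [dotProduct, mulVec, Fin.sum_univ_two, star_trivial, det_fin_two, hsymm.apply 0 1]
    ring
  rw [hsquare]
  by_cases h1 : x 1 = 0
  · have h0 : x 0 ≠ 0 := fun h0 => hx <| funext <| Fin.forall_fin_two.2 ⟨h0, h1⟩
    simp only [h1, mul_zero, add_zero, zero_pow two_ne_zero]
    positivity
  · positivity

lemma isOpen_setOf_posDef {X : Type*} [TopologicalSpace X] {A : X → Matrix (Fin 2) (Fin 2) ℝ}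
    (hA : Continuous A) (hsymm : ∀ x, (A x).IsSymm) : IsOpen {x | (A x).PosDef} := by
  simp only [posDef_fin_two_iff, hsymm, true_and]
  exact (isOpen_lt continuous_const (hA.matrix_elem 0 0)).inter
    (isOpen_lt continuous_const hA.matrix_det)

lemma eqOn_zero_of_imaginary_axis {E : Type*} [NormedAddCommGroup E] [NormedSpace ℂ E]
    [CompleteSpace E] {U : Set ℂ} (hU : IsOpen U) (hU' : IsPreconnected U) (h0 : 0 ∈ U)
    {f : ℂ → E} (hf : DifferentiableOn ℂ f U) (hfI : ∀ t : ℝ, t * I ∈ U → f (t * I) = 0) :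
    Set.EqOn f 0 U := by
  have hcont : Tendsto (fun t : ℝ => t * I) (𝓝 0) (𝓝 0) :=
    Continuous.tendsto' (by fun_prop) _ _ (by simp)
  have htend : Tendsto (fun t : ℝ => t * I) (𝓝[≠] 0) (𝓝[≠] 0) :=
    hcont.inf (tendsto_principal_principal.2 fun t (ht : t ≠ 0) => by simpa using ht)
  refine (hf.analyticOnNhd hU).eqOn_zero_of_preconnected_of_frequently_eq_zero hU' h0
    (htend.frequently (Eventually.frequently ?_))
  exact ((hcont.eventually (hU.mem_nhds h0)).mono hfI).filter_mono nhdsWithin_le_nhds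

/-- The point `z Re τ + i Im τ`. For complex `z` near the segment `[0, 1]` it joins the purely
imaginary point `i Im τ` to `τ`. -/
def scaleRe (τ : Fin 2 → Fin 2 → ℂ) (z : ℂ) : Fin 2 → Fin 2 → ℂ :=
  fun i j => z * (τ i j).re + (τ i j).im * I

variable {τ : Fin 2 → Fin 2 → ℂ}

lemma scaleRe_mem_H2_iff (hτ : (Matrix.of τ).IsSymm) {z : ℂ} : scaleRe τ z ∈ H2 ↔
    (z.im • (Matrix.of τ).map re + (Matrix.of τ).map im).PosDef := by
  have him : (Matrix.of fun i j => (scaleRe τ z i j).im) =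
      z.im • (Matrix.of τ).map re + (Matrix.of τ).map im := by
    ext
    simp [scaleRe]
  have hsymm : (Matrix.of (scaleRe τ z)).IsSymm := hτ.map fun w => z * w.re + w.im * I
  exact (and_iff_right hsymm).trans (by rw [him])

lemma eqOn_zero_of_neg_star_eq_self {E : Type*} [NormedAddCommGroup E] [NormedSpace ℂ E]
    [CompleteSpace E] {F : (Fin 2 → Fin 2 → ℂ) → E} (hF : DifferentiableOn ℂ F H2)
    (h0 : ∀ τ ∈ H2, -star τ = τ → F τ = 0) : Set.EqOn F 0 H2 := by
  intro τ hτ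
  set A : ℂ → Matrix (Fin 2) (Fin 2) ℝ :=
    fun z => z.im • (Matrix.of τ).map re + (Matrix.of τ).map im with hA
  have hmem (z : ℂ) : scaleRe τ z ∈ H2 ↔ (A z).PosDef := scaleRe_mem_H2_iff hτ.1
  have hreal (x : ℝ) : scaleRe τ x ∈ H2 := by
    rw [hmem]
    simp only [hA, ofReal_im, zero_smul, zero_add]
    exact hτ.2
  have hopen : IsOpen {z | scaleRe τ z ∈ H2} := by
    simp only [hmem]
    exact isOpen_setOf_posDef (by fun_prop) fun z => ((hτ.1.map re).smul _).add (hτ.1.map im)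
  have hconvex : Convex ℝ {z | scaleRe τ z ∈ H2} := by
    simp only [hmem]
    refine convex_iff_forall_pos.2 fun z hz w hw a b ha hb hab => ?_
    have hcomb : A (a • z + b • w) = a • A z + b • A w := by
      obtain rfl : b = 1 - a := by linarith
      simp only [hA, add_im, smul_im, smul_eq_mul]
      module
    rw [Set.mem_ofPred_eq, hcomb]
    exact (hz.smul ha).add (hw.smul hb)
  have hscale : Differentiable ℂ (scaleRe τ) := by
    unfold scaleRe
    fun_prop
  have hone : scaleRe τ 1 = τ := by simp [funext_iff, scaleRe, re_add_im]
  rw [← hone]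
  exact eqOn_zero_of_imaginary_axis hopen hconvex.isPreconnected (by simpa using hreal 0)
    (hF.comp hscale.differentiableOn fun _ hz => hz)
    (fun t ht => h0 _ ht (by ext; simp [scaleRe, add_comm])) (by simpa using hreal 1)

end IdentityTheorem

section ModularGroup

/-- `Sp4Z` as a submonoid of the integer matrices; `Group siegelModularGroup` below makes it the
group `Γ₂`. -/
def siegelModularGroup : Submonoid (Matrix (Fin 4) (Fin 4) ℤ) where
  carrier := Sp4Z
  one_mem' := show _ * _ * _ = J4 by simp
  mul_mem' {γ δ} (hγ : γᵀ * J4 * γ = J4) (hδ : δᵀ * J4 * δ = J4) := by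
    calc (γ * δ)ᵀ * J4 * (γ * δ) = δᵀ * (γᵀ * J4 * γ) * δ := by
          simp only [transpose_mul, Matrix.mul_assoc]
      _ = J4 := by rw [hγ, hδ]

lemma neg_J4_mul_transpose_mul_J4_mul {γ : Matrix (Fin 4) (Fin 4) ℤ} (hγ : γ ∈ Sp4Z) :
    -(J4 * γᵀ * J4) * γ = 1 := by
  have hJ : γᵀ * J4 * γ = J4 := hγ
  rw [Matrix.neg_mul, Matrix.mul_assoc, Matrix.mul_assoc, ← Matrix.mul_assoc γᵀ, hJ]
  decide

lemma mem_Sp4Z_of_mul_eq_one {γ δ : Matrix (Fin 4) (Fin 4) ℤ} (hγ : γ ∈ Sp4Z) (h : γ * δ = 1) :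
    δ ∈ Sp4Z := by
  have hJ : γᵀ * J4 * γ = J4 := hγ
  calc δᵀ * J4 * δ = δᵀ * (γᵀ * J4 * γ) * δ := by rw [hJ]
    _ = (γ * δ)ᵀ * J4 * (γ * δ) := by simp only [transpose_mul, Matrix.mul_assoc]
    _ = J4 := by rw [h, transpose_one, Matrix.one_mul, Matrix.mul_one]

instance : Group siegelModularGroup where
  inv γ := ⟨-(J4 * γ.1ᵀ * J4), mem_Sp4Z_of_mul_eq_one γ.2 <|
    mul_eq_one_comm.1 (neg_J4_mul_transpose_mul_J4_mul γ.2)⟩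
  inv_mul_cancel γ := Subtype.ext (neg_J4_mul_transpose_mul_J4_mul γ.2)

/-- Reduction modulo 2. It takes values in a group of units because `Γ₂` is a group. -/
def mod2 : siegelModularGroup →* (Matrix (Fin 4) (Fin 4) (ZMod 2))ˣ :=
  ((Int.castRingHom (ZMod 2)).mapMatrix.toMonoidHom.comp siegelModularGroup.subtype).toHomUnits

instance : Fintype mod2.range := Fintype.ofFinite _

lemma mod2_eq_mod2_iff {γ δ : siegelModularGroup} :
    mod2 γ = mod2 δ ↔ ∀ i j, (γ.1 i j : ZMod 2) = δ.1 i j :=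
  Units.ext_iff.trans Matrix.ext_iff.symm

lemma mod2_eq_one_iff {γ : siegelModularGroup} : mod2 γ = 1 ↔ γ.1 ∈ Sp4Z2 := by
  rw [← map_one mod2, mod2_eq_mod2_iff]
  simp [Sp4Z2, Matrix.one_apply, show γ.1 ∈ Sp4Z from γ.2]

lemma mod2_epsConj (γ : siegelModularGroup) : mod2 ⟨epsConj γ, epsConj_mem γ.2⟩ = mod2 γ := by
  refine mod2_eq_mod2_iff.2 fun i j => ?_
  fin_cases i <;> fin_cases j <;> simp [epsConj, ZMod.neg_eq_self_mod_two]

/-- A representative in `Γ₂` of a class modulo `Γ₂[2]`, the classes being identified with their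
reductions modulo 2. -/
def mod2Lift (q : mod2.range) : siegelModularGroup :=
  q.2.choose

lemma mod2_mod2Lift (q : mod2.range) : mod2 (mod2Lift q) = q :=
  q.2.choose_spec

lemma sum_mod2Lift_mul {M : Type*} [AddCommMonoid M] {f : siegelModularGroup → M}
    (hf : ∀ γ δ, mod2 γ = mod2 δ → f γ = f δ) (δ : siegelModularGroup) :
    ∑ q, f (mod2Lift q * δ) = ∑ q, f (mod2Lift q) :=
  Fintype.sum_equiv (Equiv.mulRight (mod2.rangeRestrict δ)) _ _ fun q => hf _ _ <| by
    simp [mod2_mod2Lift]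

end ModularGroup

section Symmetrization

variable {j : ℕ} {k : ℤ} {F : (Fin 2 → Fin 2 → ℂ) → Fin (j + 1) → ℂ} {τ : Fin 2 → Fin 2 → ℂ}

lemma eqOn_slashS_of_isSiegelCuspForm (hF : IsSiegelCuspForm j k Sp4Z2 (fun _ => 1) F) :
    ∀ γ ∈ Sp4Z2, Set.EqOn (slashS j k γ F) F H2 := fun γ hγ τ hτ =>
  (slashS_eq_iff hγ.1 hτ _).2 ((hF.2.1 γ hγ τ hτ).trans (one_smul ℂ _))

lemma slashS_eq_of_mod2_eq (hF : ∀ γ ∈ Sp4Z2, Set.EqOn (slashS j k γ F) F H2)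
    {γ δ : siegelModularGroup} (h : mod2 γ = mod2 δ) :
    Set.EqOn (slashS j k γ F) (slashS j k δ F) H2 := by
  intro τ hτ
  have hlevel : (γ * δ⁻¹ : siegelModularGroup).1 ∈ Sp4Z2 :=
    mod2_eq_one_iff.1 (by rw [map_mul, map_inv, h, mul_inv_cancel])
  calc slashS j k γ F τ = slashS j k ((γ * δ⁻¹ : siegelModularGroup).1 * δ.1) F τ := by
        rw [← Submonoid.coe_mul, inv_mul_cancel_right]
    _ = slashS j k δ (slashS j k (γ * δ⁻¹ : siegelModularGroup).1 F) τ :=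
        slashS_mul _ δ.2 F hτ
    _ = slashS j k δ F τ := slashS_congr (hF _ hlevel) δ.2 hτ

/-- The product of a form with its conjugate; at a purely imaginary point its values on real
vectors are squared absolute values. -/
def normForm (F : (Fin 2 → Fin 2 → ℂ) → Fin (j + 1) → ℂ) :
    (Fin 2 → Fin 2 → ℂ) → Fin (2 * j + 1) → ℂ :=
  fun τ => symMul j j (2 * j) (F τ) (conjForm F τ)

lemma normForm_congr {G : (Fin 2 → Fin 2 → ℂ) → Fin (j + 1) → ℂ} (h : Set.EqOn F G H2) :
    Set.EqOn (normForm F) (normForm G) H2 := fun τ hτ => by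
  rw [normForm, normForm, conjForm, conjForm, h hτ, h (neg_star_mem_H2 hτ)]

lemma differentiableOn_normForm (hF : DifferentiableOn ℂ F H2) :
    DifferentiableOn ℂ (normForm F) H2 :=
  differentiableOn_symMul hF (differentiableOn_conjForm hF)

lemma binaryForm_normForm_of_neg_star_eq_self (hτ : -star τ = τ) (y : ℝ) :
    binaryForm (2 * j) 1 y (normForm F τ) = normSq (binaryForm j 1 y (F τ)) := by
  rw [normForm, conjForm, hτ, binaryForm_symMul (two_mul j).symm, binaryForm_star, ← mul_conj]
  simp

lemma slashS_normForm {γ : Matrix (Fin 4) (Fin 4) ℤ} (hγ : γ ∈ Sp4Z) (hτ : τ ∈ H2) :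
    slashS (2 * j) (2 * k) γ (normForm F) τ =
      symMul j j (2 * j) (slashS j k γ F τ) (conjForm (slashS j k (epsConj γ) F) τ) := by
  rw [two_mul k, ← slashS_conjForm, ← slashS_symMul (two_mul j).symm k k hγ hτ]
  rfl

lemma slashS_normForm_slashS (hF : ∀ γ ∈ Sp4Z2, Set.EqOn (slashS j k γ F) F H2)
    (γ δ : siegelModularGroup) :
    Set.EqOn (slashS (2 * j) (2 * k) δ (normForm (slashS j k γ F)))
      (normForm (slashS j k (γ * δ : siegelModularGroup) F)) H2 := by
  intro τ hτ
  have hε : mod2 (γ * ⟨epsConj δ, epsConj_mem δ.2⟩) = mod2 (γ * δ) := by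
    rw [map_mul, mod2_epsConj, map_mul]
  rw [slashS_normForm δ.2 hτ, ← slashS_mul _ δ.2 F hτ, normForm, conjForm, conjForm,
    ← slashS_mul _ (epsConj_mem δ.2) F (neg_star_mem_H2 hτ)]
  rw [← slashS_eq_of_mod2_eq hF hε (neg_star_mem_H2 hτ)]
  rfl

/-- The sum of the `normForm (F|γ)` over `γ ∈ Γ₂[2]\Γ₂`, cut off outside `ℍ₂`. -/
def levelOneForm (j : ℕ) (k : ℤ) (F : (Fin 2 → Fin 2 → ℂ) → Fin (j + 1) → ℂ) :
    (Fin 2 → Fin 2 → ℂ) → Fin (2 * j + 1) → ℂ :=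
  H2.indicator (∑ q, normForm (slashS j k (mod2Lift q) F))

lemma eqOn_levelOneForm :
    Set.EqOn (levelOneForm j k F) (∑ q, normForm (slashS j k (mod2Lift q) F)) H2 :=
  Set.eqOn_indicator

lemma slashS_levelOneForm (hF : ∀ γ ∈ Sp4Z2, Set.EqOn (slashS j k γ F) F H2)
    (δ : siegelModularGroup) :
    Set.EqOn (slashS (2 * j) (2 * k) δ (levelOneForm j k F))
      (∑ q, normForm (slashS j k (mod2Lift q * δ : siegelModularGroup) F)) H2 := by
  intro τ hτ
  rw [slashS_congr eqOn_levelOneForm δ.2 hτ, slashS_sum, Finset.sum_apply, Finset.sum_apply]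
  exact Finset.sum_congr rfl fun q _ => slashS_normForm_slashS hF _ δ hτ

lemma slashS_levelOneForm_eq_self (hF : ∀ γ ∈ Sp4Z2, Set.EqOn (slashS j k γ F) F H2)
    (δ : siegelModularGroup) :
    Set.EqOn (slashS (2 * j) (2 * k) δ (levelOneForm j k F)) (levelOneForm j k F) H2 := by
  intro τ hτ
  rw [slashS_levelOneForm hF δ hτ, eqOn_levelOneForm hτ, Finset.sum_apply, Finset.sum_apply]
  exact sum_mod2Lift_mul (f := fun γ => normForm (slashS j k γ F) τ)
    (fun γ γ' h => normForm_congr (slashS_eq_of_mod2_eq hF h) hτ) δ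

lemma diagH_mem_H2 {τ₁ τ₂ : ℂ} (h₁ : 0 < τ₁.im) (h₂ : 0 < τ₂.im) : diagH τ₁ τ₂ ∈ H2 := by
  have him : (Matrix.of fun i j => (diagH τ₁ τ₂ i j).im) = diagonal ![τ₁.im, τ₂.im] := by
    ext i j
    fin_cases i <;> fin_cases j <;> simp [diagH]
  refine ⟨?_, him ▸ .diagonal ?_⟩
  · ext i j
    fin_cases i <;> fin_cases j <;> simp [diagH]
  · simpa [Fin.forall_fin_two] using ⟨h₁, h₂⟩

lemma neg_star_diagH (τ₁ τ₂ : ℂ) : -star (diagH τ₁ τ₂) = diagH (-star τ₁) (-star τ₂) := by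
  ext i j
  fin_cases i <;> fin_cases j <;> simp [diagH]

lemma tendsto_normForm_diagH
    (hF : ∀ τ₁ : ℂ, 0 < τ₁.im → Tendsto (fun t : ℝ => F (diagH τ₁ (t * I))) atTop (𝓝 0))
    {τ₁ : ℂ} (hτ₁ : 0 < τ₁.im) :
    Tendsto (fun t : ℝ => normForm F (diagH τ₁ (t * I))) atTop (𝓝 0) := by
  have hconj : Tendsto (fun t : ℝ => conjForm F (diagH τ₁ (t * I))) atTop (𝓝 0) := by
    simpa [conjForm, neg_star_diagH] using (hF (-star τ₁) (by simpa using hτ₁)).star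
  have hmul : Continuous fun p : (Fin (j + 1) → ℂ) × (Fin (j + 1) → ℂ) =>
      symMul j j (2 * j) p.1 p.2 :=
    continuousOn_univ.1
      (differentiableOn_symMul differentiableOn_fst differentiableOn_snd).continuousOn
  have hlim := (hmul.tendsto (0, 0)).comp ((hF τ₁ hτ₁).prodMk_nhds hconj)
  rwa [map_zero] at hlim

lemma isSiegelCuspForm_levelOneForm (hF : IsSiegelCuspForm j k Sp4Z2 (fun _ => 1) F) :
    IsSiegelCuspForm (2 * j) (2 * k) Sp4Z (fun _ => 1) (levelOneForm j k F) := by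
  have hslash := eqOn_slashS_of_isSiegelCuspForm hF
  refine ⟨?_, ?_, ?_, fun τ hτ => Set.indicator_of_notMem hτ _⟩
  · refine (DifferentiableOn.sum fun q _ => ?_).congr eqOn_levelOneForm
    exact differentiableOn_normForm (differentiableOn_slashS k (mod2Lift q).2 hF.1)
  · intro γ hγ τ hτ
    rw [one_smul, ← slashS_eq_iff hγ hτ]
    exact slashS_levelOneForm_eq_self hslash ⟨γ, hγ⟩ hτ
  · intro γ hγ τ₁ hτ₁
    have hsum : Tendsto (fun t : ℝ => ∑ q,
        normForm (slashS j k (mod2Lift q * γ) F) (diagH τ₁ (t * I))) atTop (𝓝 0) := by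
      simpa using tendsto_finsetSum Finset.univ fun q _ => tendsto_normForm_diagH
        (hF.2.2.1 (mod2Lift q * ⟨γ, hγ⟩ : siegelModularGroup) (Subtype.prop _)) hτ₁
    refine hsum.congr' ?_
    filter_upwards [eventually_gt_atTop 0] with t ht
    have hmem : diagH τ₁ (t * I) ∈ H2 := diagH_mem_H2 hτ₁ (by simpa using ht)
    rw [slashS_levelOneForm hslash ⟨γ, hγ⟩ hmem, Finset.sum_apply]
    rfl

lemma eqOn_zero_of_levelOneForm_eq_zero (hF : DifferentiableOn ℂ F H2)
    (hslash : ∀ γ ∈ Sp4Z2, Set.EqOn (slashS j k γ F) F H2) (h : levelOneForm j k F = 0) :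
    Set.EqOn F 0 H2 := by
  refine eqOn_zero_of_neg_star_eq_self hF fun τ hτ hfix => ?_
  refine eq_zero_of_binaryForm_one_ofReal_eq_zero fun y => ?_
  have hsum : ∑ q, normSq (binaryForm j 1 y (slashS j k (mod2Lift q) F τ)) = 0 := by
    have h0 : ∑ q, normForm (slashS j k (mod2Lift q) F) τ = 0 := by
      rw [← Finset.sum_apply, ← eqOn_levelOneForm hτ, h, Pi.zero_apply]
    have := congrArg (binaryForm (2 * j) 1 y) h0
    simp only [map_sum, binaryForm_normForm_of_neg_star_eq_self hfix, map_zero] at this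
    exact_mod_cast this
  have hone := (Finset.sum_eq_zero_iff_of_nonneg fun _ _ => normSq_nonneg _).1 hsum 1
    (Finset.mem_univ _)
  have hlevel : (mod2Lift (1 : mod2.range)).1 ∈ Sp4Z2 := mod2_eq_one_iff.1 (mod2_mod2Lift 1)
  rwa [normSq_eq_zero, hslash _ hlevel hτ] at hone

end Symmetrization

theorem nonzero_level_two_implies_nonzero_level_one_general (j : ℕ) (k : ℤ)
    (h : SiegelCusp j k Sp4Z2 (fun _ => 1) ≠ ⊥) :
    SiegelCusp (2 * j) (2 * k) Sp4Z (fun _ => 1) ≠ ⊥ := by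
  obtain ⟨F, hF : IsSiegelCuspForm j k Sp4Z2 (fun _ => 1) F, hF0⟩ :=
    Submodule.exists_mem_ne_zero_of_ne_bot h
  refine (Submodule.ne_bot_iff _).2
    ⟨levelOneForm j k F, isSiegelCuspForm_levelOneForm hF, fun hG => hF0 ?_⟩
  funext τ
  by_cases hτ : τ ∈ H2
  · exact eqOn_zero_of_levelOneForm_eq_zero hF.1 (eqOn_slashS_of_isSiegelCuspForm hF) hG hτ
  · exact hF.2.2.2 τ hτ

/-- Let `j ≥ 0` and `k ∈ {1,2}`. If `S_{j,k}(Γ₂[2])` is nonzero, then `S_{2j,2k}(Γ₂)` is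
nonzero. -/
theorem nonzero_level_two_implies_nonzero_level_one (j : ℕ) (k : ℤ) (hk : k = 1 ∨ k = 2)
    (h : SiegelCusp j k Sp4Z2 (fun _ => 1) ≠ ⊥) :
    SiegelCusp (2 * j) (2 * k) Sp4Z (fun _ => 1) ≠ ⊥ :=
  nonzero_level_two_implies_nonzero_level_one_general j k h
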